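/- Let λ < 0, let n be an integer with 2 ≤ n ≤ 4, and let μ₁ ∈ ℝ. Then there exists a constant L ≥ -(n-1)/λ and a unique function h ∈ C²((0,L)) ∩ C¹([0,L)) satisfying 2r²h(r)h''(r) = (n-1)h(r)(h(r)-1) + r h'(r)(r h'(r) - λr - (n-1)) with h(r) > 0 on (0,L), together with h(0) = 1 and h'(0) = μ₁. -/

import Mathlib

open Set Filter Topology

/-- `h` is a solution of
`2r²h h'' = (n-1)h(h-1) + r h'(r h' - λr - (n-1))`, `h > 0` on `(0,L)`,
with `h ∈ C²((0,L)) ∩ C¹([0,L))`, `h(0) = 1` and `h'(0) = μ₁`. -/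
def IsSolOn (n : ℕ) (lam μ₁ L : ℝ) (h : ℝ → ℝ) : Prop :=
  ContDiffOn ℝ 2 h (Set.Ioo 0 L) ∧ ContDiffOn ℝ 1 h (Set.Ico 0 L) ∧
  (∀ r ∈ Set.Ioo (0 : ℝ) L,
    2 * r ^ 2 * h r * deriv (deriv h) r =
      ((n : ℝ) - 1) * h r * (h r - 1) +
        r * deriv h r * (r * deriv h r - lam * r - ((n : ℝ) - 1)) ∧ 0 < h r) ∧
  h 0 = 1 ∧ derivWithin h (Set.Ici 0) 0 = μ₁

/-!
Writing `h = 1 + r u`, `p = h'` and `m = n - 1` turns the equation into the Fuchsian system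
`r u' = p - u`, `r p' = -(m / 2) (p - u) + r F(r, u, p)` with `F` locally Lipschitz as long as
`h > 0`. The linear part has explicit regular solution operators, bounded by integration, so
for a globally Lipschitz `F` a contraction argument in an exponentially weighted norm solves the
system on any interval. Solutions are unique because the singular term only dissipates energy.

It remains to bound `u` and `p`, and `h` from below, while `m + λ r > 0`. The quantity
`p + (m / (2 r) + λ / 2) log h` is nondecreasing, since `log h ≤ h - 1`; hence `h' > 0` whenever
`h` reaches a small enough level, which it therefore never crosses. With `h` bounded below,
`1 + h + p² / (4 h)` grows at most exponentially. The cutoff of `F` is thus never felt, and the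
solutions on all `[0, T)` with `m + λ T > 0` glue to one on `[0, -m / λ)`.
-/

open scoped NNReal

section EulerPrimitive

variable {E : Type*} [NormedAddCommGroup E] [NormedSpace ℝ E]

/-- The solution of `y' = -(κ / r) y + w` that is regular at `r = 0`. For `r > 0` it is
`r ^ (-κ) ∫₀ʳ ρ ^ κ w(ρ) dρ`, written with the substitution `ρ = r s` so that it makes sense at
`r = 0` too. For `κ = 0` it is the primitive of `w`. -/
noncomputable def eulerPrimitive (κ : ℝ) (w : ℝ → E) (r : ℝ) : E :=
  r • ∫ s in (0 : ℝ)..1, s ^ κ • w (r * s)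

variable {κ : ℝ} {w : ℝ → E}

@[simp]
lemma eulerPrimitive_zero (κ : ℝ) (w : ℝ → E) : eulerPrimitive κ w 0 = 0 :=
  zero_smul _ _

lemma continuous_rpow_smul_comp_mul (hκ : 0 ≤ κ) (hw : Continuous w) :
    Continuous fun x : ℝ × ℝ => x.2 ^ κ • w (x.1 * x.2) :=
  ((Real.continuous_rpow_const hκ).comp continuous_snd).smul (hw.comp continuous_mul)

lemma continuous_eulerPrimitive (hκ : 0 ≤ κ) (hw : Continuous w) :
    Continuous (eulerPrimitive κ w) :=
  continuous_id.smul <| intervalIntegral.continuous_parametric_intervalIntegral_of_continuous'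
    (continuous_rpow_smul_comp_mul hκ hw) 0 1

lemma eulerPrimitive_sub {w' : ℝ → E} (hκ : 0 ≤ κ) (hw : Continuous w) (hw' : Continuous w')
    (r : ℝ) : eulerPrimitive κ (w - w') r = eulerPrimitive κ w r - eulerPrimitive κ w' r := by
  have integrable {f : ℝ → E} (hf : Continuous f) :
      IntervalIntegrable (fun s : ℝ => s ^ κ • f (r * s)) MeasureTheory.volume 0 1 :=
    ((continuous_rpow_smul_comp_mul hκ hf).comp (Continuous.prodMk_right r)).intervalIntegrable _ _
  simp only [eulerPrimitive, Pi.sub_apply, smul_sub]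
  rw [intervalIntegral.integral_sub (integrable hw) (integrable hw'), smul_sub]

lemma eulerPrimitive_eq_rpow_smul_integral {r : ℝ} (hr : 0 < r) :
    eulerPrimitive κ w r = r ^ (-κ) • ∫ ρ in (0 : ℝ)..r, ρ ^ κ • w ρ := by
  have subst := intervalIntegral.smul_integral_comp_mul_left (a := 0) (b := 1)
    (fun ρ : ℝ => ρ ^ κ • w ρ) r
  have scale : ∫ s in (0 : ℝ)..1, (r * s) ^ κ • w (r * s) =
      r ^ κ • ∫ s in (0 : ℝ)..1, s ^ κ • w (r * s) := by
    rw [← intervalIntegral.integral_smul]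
    refine intervalIntegral.integral_congr fun s hs => ?_
    rw [uIcc_of_le zero_le_one] at hs
    simp only [Real.mul_rpow hr.le hs.1, mul_smul]
  rw [mul_zero, mul_one, scale] at subst
  rw [← subst, smul_comm r, smul_smul, ← Real.rpow_add hr, neg_add_cancel, Real.rpow_zero,
    one_smul, eulerPrimitive]

lemma hasDerivAt_eulerPrimitive [CompleteSpace E] (hκ : 0 ≤ κ) (hw : Continuous w) {r : ℝ}
    (hr : 0 < r) :
    HasDerivAt (eulerPrimitive κ w) (-(κ / r) • eulerPrimitive κ w r + w r) r := by
  have hc : Continuous fun ρ : ℝ => ρ ^ κ • w ρ := (Real.continuous_rpow_const hκ).smul hw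
  have hprod := (Real.hasDerivAt_rpow_const (p := -κ) (Or.inl hr.ne')).smul
    (intervalIntegral.integral_hasDerivAt_right (hc.intervalIntegrable 0 r)
      (hc.stronglyMeasurableAtFilter _ _) hc.continuousAt)
  have heq : eulerPrimitive κ w =ᶠ[𝓝 r] fun x => x ^ (-κ) • ∫ ρ in (0 : ℝ)..x, ρ ^ κ • w ρ := by
    filter_upwards [lt_mem_nhds hr] with x hx using eulerPrimitive_eq_rpow_smul_integral hx
  refine (hprod.congr_of_eventuallyEq heq).congr_deriv ?_
  rw [eulerPrimitive_eq_rpow_smul_integral hr, smul_smul, smul_smul, ← Real.rpow_add hr,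
    neg_add_cancel, Real.rpow_zero, one_smul, Real.rpow_sub_one hr.ne', add_comm]
  congr 2
  ring

lemma integral_exp_mul_le {A : ℝ} (hA : 0 < A) (t : ℝ) :
    ∫ ρ in (0 : ℝ)..t, Real.exp (A * ρ) ≤ Real.exp (A * t) / A := by
  rw [intervalIntegral.integral_comp_mul_left _ hA.ne', integral_exp, smul_eq_mul,
    inv_mul_eq_div]
  gcongr
  linarith [Real.exp_pos (A * 0)]

lemma norm_eulerPrimitive_le {A δ t : ℝ} (hκ : 0 ≤ κ) (hA : 0 < A) (ht : 0 ≤ t)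
    (hw : ∀ ρ, ‖w ρ‖ ≤ δ * Real.exp (A * ρ)) :
    ‖eulerPrimitive κ w t‖ ≤ δ * (Real.exp (A * t) / A) := by
  have hδ : 0 ≤ δ := by simpa using (norm_nonneg _).trans (hw 0)
  have hbound : ‖∫ s in (0 : ℝ)..1, s ^ κ • w (t * s)‖ ≤
      ∫ s in (0 : ℝ)..1, δ * Real.exp (A * (t * s)) := by
    refine intervalIntegral.norm_integral_le_of_norm_le zero_le_one
      (Eventually.of_forall fun s hs => ?_) (Continuous.intervalIntegrable (by fun_prop) _ _)
    rw [norm_smul, Real.norm_of_nonneg (Real.rpow_nonneg hs.1.le κ)]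
    exact (mul_le_of_le_one_left (norm_nonneg _) (Real.rpow_le_one hs.1.le hs.2 hκ)).trans (hw _)
  have hsubst := intervalIntegral.mul_integral_comp_mul_left (a := 0) (b := 1)
    (f := fun ρ => Real.exp (A * ρ)) t
  rw [mul_zero, mul_one] at hsubst
  rw [eulerPrimitive, norm_smul, Real.norm_of_nonneg ht]
  calc t * ‖∫ s in (0 : ℝ)..1, s ^ κ • w (t * s)‖
      ≤ t * ∫ s in (0 : ℝ)..1, δ * Real.exp (A * (t * s)) := by gcongr
    _ = δ * ∫ ρ in (0 : ℝ)..t, Real.exp (A * ρ) := by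
      rw [intervalIntegral.integral_const_mul, ← hsubst]
      ring
    _ ≤ δ * (Real.exp (A * t) / A) := by gcongr; exact integral_exp_mul_le hA t

end EulerPrimitive

section Volterra

variable {X Y : Type*} [NormedAddCommGroup X] [PseudoMetricSpace Y]

/-- An operator with the Lipschitz estimate of an integral operator `w ↦ ∫₀ʳ k(r, ρ) w(ρ) dρ` whose
kernel is bounded by `C`: in the norm with weight `exp (-A r)` its Lipschitz constant is `C / A`. -/
structure IsVolterraOperator (C : ℝ≥0) (Φ : (ℝ → X) → ℝ → Y) : Prop where
  continuous : ∀ w, Continuous w → Continuous (Φ w)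
  dist_le : ∀ A > 0, ∀ δ w w', Continuous w → Continuous w' →
    (∀ ρ, ‖w ρ - w' ρ‖ ≤ δ * Real.exp (A * ρ)) →
    ∀ t ≥ 0, dist (Φ w t) (Φ w' t) ≤ C * (δ * (Real.exp (A * t) / A))

variable {Φ : (ℝ → X) → ℝ → Y} {C K : ℝ≥0} {R : ℝ}

lemma IsVolterraOperator.exp_neg_mul_dist_le (hΦ : IsVolterraOperator C Φ) {g : Y → X}
    (hg : LipschitzWith K g) {A δ : ℝ} (hA : 0 < A) {w w' : ℝ → X} (hw : Continuous w)
    (hw' : Continuous w') (hδ : ∀ ρ, ‖w ρ - w' ρ‖ ≤ δ * Real.exp (A * ρ)) {t : ℝ} (ht : 0 ≤ t) :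
    Real.exp (-(A * t)) * dist (g (Φ w t)) (g (Φ w' t)) ≤ K * C / A * δ :=
  calc Real.exp (-(A * t)) * dist (g (Φ w t)) (g (Φ w' t))
      ≤ Real.exp (-(A * t)) * (K * (C * (δ * (Real.exp (A * t) / A)))) := by
        gcongr
        exact (hg.dist_le_mul _ _).trans (by gcongr; exact hΦ.dist_le A hA δ w w' hw hw' hδ t ht)
    _ = (Real.exp (-(A * t)) * Real.exp (A * t)) * (K * C / A * δ) := by ring
    _ = K * C / A * δ := by rw [← Real.exp_add, neg_add_cancel, Real.exp_zero, one_mul]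

-- In the norm with weight `exp (-A r)`, `A = 2 K C + 1`, the map `w ↦ G (Φ w)` is a contraction on
-- the whole of `[0, R]`, so no gluing of short intervals is needed.
theorem IsVolterraOperator.exists_fixedPoint [NormedSpace ℝ X] [CompleteSpace X]
    (hΦ : IsVolterraOperator C Φ) {G : ℝ → Y → X} (hR : 0 ≤ R)
    (hGc : Continuous (Function.uncurry G)) (hG : ∀ r ∈ Icc 0 R, LipschitzWith K (G r)) :
    ∃ w, Continuous w ∧ ∀ r ∈ Icc 0 R, w r = G r (Φ w r) := by
  set A : ℝ := 2 * K * C + 1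
  have hA : 0 < A := by positivity
  let weighted (f : C(Icc 0 R, X)) (ρ : ℝ) : X := Real.exp (A * ρ) • IccExtend hR f ρ
  have hweighted (f) : Continuous (weighted f) :=
    (by fun_prop : Continuous fun ρ => Real.exp (A * ρ)).smul f.continuous.Icc_extend'
  let S (f : C(Icc 0 R, X)) : C(Icc 0 R, X) :=
    ⟨fun r => Real.exp (-(A * r)) • G r (Φ (weighted f) r), by
      have hΦc := hΦ.continuous _ (hweighted f)
      have : Continuous fun r => G r (Φ (weighted f) r) := hGc.comp (continuous_id.prodMk hΦc)
      fun_prop⟩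
  have hS : ContractingWith (1 / 2) S := by
    refine ⟨by norm_num, LipschitzWith.of_dist_le_mul fun f g => ?_⟩
    refine (ContinuousMap.dist_le (by positivity)).2 fun r => ?_
    have hfg (ρ : ℝ) : ‖weighted f ρ - weighted g ρ‖ ≤ dist f g * Real.exp (A * ρ) := by
      rw [← smul_sub, norm_smul, Real.norm_of_nonneg (Real.exp_pos _).le, mul_comm]
      gcongr
      exact (dist_eq_norm _ _).symm.trans_le (ContinuousMap.dist_apply_le_dist _)
    have hhalf : K * C / A ≤ 1 / 2 := by
      rw [div_le_iff₀ hA]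
      linarith
    simp only [S, ContinuousMap.coe_mk, dist_smul₀, Real.norm_of_nonneg (Real.exp_pos _).le]
    refine (hΦ.exp_neg_mul_dist_le (hG r r.2) hA (hweighted f) (hweighted g) hfg r.2.1).trans ?_
    push_cast
    gcongr
  obtain ⟨f, hf⟩ : ∃ f, S f = f := ⟨_, hS.fixedPoint_isFixedPt⟩
  refine ⟨weighted f, hweighted f, fun r hr => ?_⟩
  have hfr : f ⟨r, hr⟩ = Real.exp (-(A * r)) • G r (Φ (weighted f) r) :=
    (DFunLike.congr_fun hf ⟨r, hr⟩).symm
  calc weighted f r = Real.exp (A * r) • f ⟨r, hr⟩ := by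
        simp only [weighted, IccExtend_of_mem hR _ hr]
    _ = G r (Φ (weighted f) r) := by
        rw [hfr, smul_smul, ← Real.exp_add, add_neg_cancel, Real.exp_zero, one_smul]

end Volterra

section Gronwall

lemma le_mul_exp_of_hasDerivAt_le_mul {f f' : ℝ → ℝ} {a b C : ℝ} (hf : ContinuousOn f (Ico a b))
    (hf' : ∀ r ∈ Ioo a b, HasDerivAt f (f' r) r) (hle : ∀ r ∈ Ioo a b, f' r ≤ C * f r) {r : ℝ}
    (hr : r ∈ Ico a b) : f r ≤ f a * Real.exp (C * (r - a)) := by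
  have hanti : AntitoneOn (fun r => f r * Real.exp (-(C * (r - a)))) (Ico a b) := by
    refine antitoneOn_of_hasDerivWithinAt_nonpos (convex_Ico a b) (hf.mul (by fun_prop))
      (f' := fun r => (f' r - C * f r) * Real.exp (-(C * (r - a)))) (fun r hr => ?_) fun r hr => ?_
    · rw [interior_Ico] at hr
      have hexp := ((((hasDerivAt_id r).sub_const a).const_mul C).neg).exp
      exact ((hf' r hr).mul hexp).congr_deriv (by simp; ring) |>.hasDerivWithinAt
    · rw [interior_Ico] at hr
      exact mul_nonpos_of_nonpos_of_nonneg (sub_nonpos.2 (hle r hr)) (Real.exp_pos _).le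
  have := hanti (left_mem_Ico.2 (hr.1.trans_lt hr.2)) hr hr.1
  simp only [sub_self, mul_zero, neg_zero, Real.exp_zero, mul_one, Real.exp_neg] at this
  exact (mul_inv_le_iff₀ (Real.exp_pos _)).1 this

end Gronwall

section Fuchsian

variable {E : Type*}

/-- The pair `(u, p)` solves the singular initial value problem
`r u' = p - u`, `r p' = (1 - κ) (p - u) + r G(r, u, p)`, `u(0) = p(0) = μ` on `[0, T)`. It is the
first-order form of a second-order equation for `y = r u`, with `p = y'`. -/
structure IsFuchsianSolOn [NormedAddCommGroup E] [NormedSpace ℝ E] (κ : ℝ) (G : ℝ → E × E → E)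
    (μ : E) (T : ℝ) (u p : ℝ → E) : Prop where
  continuousOn_fst : ContinuousOn u (Ico 0 T)
  continuousOn_snd : ContinuousOn p (Ico 0 T)
  fst_zero : u 0 = μ
  snd_zero : p 0 = μ
  hasDerivAt_fst : ∀ r ∈ Ioo 0 T, HasDerivAt u (r⁻¹ • (p r - u r)) r
  hasDerivAt_snd : ∀ r ∈ Ioo 0 T,
    HasDerivAt p (((1 - κ) / r) • (p r - u r) + G r (u r, p r)) r

namespace IsFuchsianSolOn

section Existence

variable [NormedAddCommGroup E] [NormedSpace ℝ E] {κ : ℝ} {G : ℝ → E × E → E} {μ : E} {T : ℝ}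
  {u p : ℝ → E}

lemma mono (h : IsFuchsianSolOn κ G μ T u p) {T' : ℝ} (hT : T' ≤ T) :
    IsFuchsianSolOn κ G μ T' u p where
  continuousOn_fst := h.continuousOn_fst.mono (Ico_subset_Ico_right hT)
  continuousOn_snd := h.continuousOn_snd.mono (Ico_subset_Ico_right hT)
  fst_zero := h.fst_zero
  snd_zero := h.snd_zero
  hasDerivAt_fst r hr := h.hasDerivAt_fst r (Ioo_subset_Ioo_right hT hr)
  hasDerivAt_snd r hr := h.hasDerivAt_snd r (Ioo_subset_Ioo_right hT hr)

lemma congr_field (h : IsFuchsianSolOn κ G μ T u p) {F : ℝ → E × E → E}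
    (hF : ∀ r ∈ Ioo 0 T, G r (u r, p r) = F r (u r, p r)) : IsFuchsianSolOn κ F μ T u p :=
  { h with hasDerivAt_snd := fun r hr => hF r hr ▸ h.hasDerivAt_snd r hr }

lemma sub {μ' : E} {u' p' : ℝ → E} (h : IsFuchsianSolOn κ G μ T u p)
    (h' : IsFuchsianSolOn κ G μ' T u' p') :
    IsFuchsianSolOn κ (fun r _ => G r (u r, p r) - G r (u' r, p' r)) (μ - μ') T (u - u')
      (p - p') where
  continuousOn_fst := h.continuousOn_fst.sub h'.continuousOn_fst
  continuousOn_snd := h.continuousOn_snd.sub h'.continuousOn_snd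
  fst_zero := congrArg₂ (· - ·) h.fst_zero h'.fst_zero
  snd_zero := congrArg₂ (· - ·) h.snd_zero h'.snd_zero
  hasDerivAt_fst r hr := ((h.hasDerivAt_fst r hr).sub (h'.hasDerivAt_fst r hr)).congr_deriv (by
    simp only [Pi.sub_apply]; module)
  hasDerivAt_snd r hr := ((h.hasDerivAt_snd r hr).sub (h'.hasDerivAt_snd r hr)).congr_deriv (by
    simp only [Pi.sub_apply]; module)

lemma congr (h : IsFuchsianSolOn κ G μ T u p) {u' p' : ℝ → E} (hT : 0 < T)
    (hu : EqOn u' u (Ico 0 T)) (hp : EqOn p' p (Ico 0 T)) : IsFuchsianSolOn κ G μ T u' p' where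
  continuousOn_fst := h.continuousOn_fst.congr hu
  continuousOn_snd := h.continuousOn_snd.congr hp
  fst_zero := (hu (left_mem_Ico.2 hT)).trans h.fst_zero
  snd_zero := (hp (left_mem_Ico.2 hT)).trans h.snd_zero
  hasDerivAt_fst r hr := by
    have hr' := Ioo_subset_Ico_self hr
    rw [hu hr', hp hr']
    exact (h.hasDerivAt_fst r hr).congr_of_eventuallyEq
      (eventuallyEq_of_mem (Ico_mem_nhds hr.1 hr.2) hu)
  hasDerivAt_snd r hr := by
    have hr' := Ioo_subset_Ico_self hr
    rw [hu hr', hp hr']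
    exact (h.hasDerivAt_snd r hr).congr_of_eventuallyEq
      (eventuallyEq_of_mem (Ico_mem_nhds hr.1 hr.2) hp)

lemma of_forall_lt (hT : 0 < T) (h : ∀ S ∈ Ioo 0 T, IsFuchsianSolOn κ G μ S u p) :
    IsFuchsianSolOn κ G μ T u p := by
  have hbetween (r) (hr : r ∈ Ico 0 T) : ∃ S ∈ Ioo 0 T, r < S := by
    obtain ⟨S, hrS, hST⟩ := exists_between hr.2
    exact ⟨S, ⟨hr.1.trans_lt hrS, hST⟩, hrS⟩
  have hnhds {r S : ℝ} (hrS : r < S) : Ico 0 S ∈ 𝓝[Ico 0 T] r :=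
    mem_nhdsWithin.2 ⟨Iio S, isOpen_Iio, hrS, fun _ hx => ⟨hx.2.1, hx.1⟩⟩
  obtain ⟨S₀, hS₀, -⟩ := hbetween 0 (left_mem_Ico.2 hT)
  refine ⟨fun r hr => ?_, fun r hr => ?_, (h S₀ hS₀).fst_zero, (h S₀ hS₀).snd_zero,
    fun r hr => ?_, fun r hr => ?_⟩
  · obtain ⟨S, hS, hrS⟩ := hbetween r hr
    exact ((h S hS).continuousOn_fst r ⟨hr.1, hrS⟩).mono_of_mem_nhdsWithin (hnhds hrS)
  · obtain ⟨S, hS, hrS⟩ := hbetween r hr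
    exact ((h S hS).continuousOn_snd r ⟨hr.1, hrS⟩).mono_of_mem_nhdsWithin (hnhds hrS)
  · obtain ⟨S, hS, hrS⟩ := hbetween r (Ioo_subset_Ico_self hr)
    exact (h S hS).hasDerivAt_fst r ⟨hr.1, hrS⟩
  · obtain ⟨S, hS, hrS⟩ := hbetween r (Ioo_subset_Ico_self hr)
    exact (h S hS).hasDerivAt_snd r ⟨hr.1, hrS⟩

/-- The solution of the Fuchsian system with `G(r, u(r), p(r))` replaced by a given function
`w(r)`. -/
noncomputable def linearSol (κ : ℝ) (μ : E) (w : ℝ → E) (r : ℝ) : E × E :=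
  (μ + κ⁻¹ • (eulerPrimitive 0 w r - eulerPrimitive κ w r),
    μ + κ⁻¹ • (eulerPrimitive 0 w r - eulerPrimitive κ w r) + eulerPrimitive κ w r)

lemma continuous_linearSol (hκ : 0 ≤ κ) (μ : E) {w : ℝ → E} (hw : Continuous w) :
    Continuous (linearSol κ μ w) := by
  have h0 := continuous_eulerPrimitive le_rfl hw
  have hκ := continuous_eulerPrimitive hκ hw
  unfold linearSol
  fun_prop

lemma isVolterraOperator_linearSol (hκ : 0 < κ) (μ : E) :
    IsVolterraOperator (2 * κ⁻¹ + 1).toNNReal (linearSol κ μ) where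
  continuous _ hw := continuous_linearSol hκ.le μ hw
  dist_le A hA δ w w' hw hw' hδ t ht := by
    set B := δ * (Real.exp (A * t) / A)
    have bound {κ : ℝ} (hκ : 0 ≤ κ) : ‖eulerPrimitive κ w t - eulerPrimitive κ w' t‖ ≤ B :=
      eulerPrimitive_sub hκ hw hw' t ▸ norm_eulerPrimitive_le hκ hA ht hδ
    have hfst : ‖(linearSol κ μ w t).1 - (linearSol κ μ w' t).1‖ ≤ 2 * κ⁻¹ * B := by
      calc ‖(linearSol κ μ w t).1 - (linearSol κ μ w' t).1‖
          = κ⁻¹ * ‖(eulerPrimitive 0 w t - eulerPrimitive 0 w' t) -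
              (eulerPrimitive κ w t - eulerPrimitive κ w' t)‖ := by
            rw [← Real.norm_of_nonneg (inv_nonneg.2 hκ.le), ← norm_smul]
            simp only [linearSol, smul_sub]
            congr 1
            abel
        _ ≤ κ⁻¹ * (B + B) := by
            gcongr
            exact (norm_sub_le _ _).trans (add_le_add (bound le_rfl) (bound hκ.le))
        _ = 2 * κ⁻¹ * B := by ring
    have hsnd : ‖(linearSol κ μ w t).2 - (linearSol κ μ w' t).2‖ ≤ 2 * κ⁻¹ * B + B := by
      refine le_trans ?_ ((norm_add_le _ _).trans (add_le_add hfst (bound hκ.le)))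
      exact (congrArg norm (add_sub_add_comm _ _ _ _)).le
    have hB : 0 ≤ B := (norm_nonneg _).trans (bound le_rfl)
    rw [Real.coe_toNNReal _ (by positivity), Prod.dist_eq, dist_eq_norm, dist_eq_norm]
    exact max_le (by linarith) (by linarith)

lemma of_linearSol [CompleteSpace E] (hκ : 0 < κ) (μ : E) {w : ℝ → E} (hw : Continuous w)
    (hG : ∀ r ∈ Ioo 0 T, w r = G r (linearSol κ μ w r)) :
    IsFuchsianSolOn κ G μ T (fun r => (linearSol κ μ w r).1) (fun r => (linearSol κ μ w r).2) := by
  have hfst (r) (hr : r ∈ Ioo 0 T) : HasDerivAt (fun r => (linearSol κ μ w r).1)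
      (r⁻¹ • eulerPrimitive κ w r) r := by
    refine (((hasDerivAt_eulerPrimitive le_rfl hw hr.1).sub
      (hasDerivAt_eulerPrimitive hκ.le hw hr.1)).const_smul κ⁻¹).const_add μ |>.congr_deriv ?_
    match_scalars <;> field_simp <;> ring
  refine ⟨(continuous_linearSol hκ.le μ hw).fst.continuousOn,
    (continuous_linearSol hκ.le μ hw).snd.continuousOn, by simp [linearSol], by simp [linearSol],
    fun r hr => (hfst r hr).congr_deriv ?_, fun r hr => ?_⟩
  · simp only [linearSol, add_sub_cancel_left]
  · refine ((hfst r hr).add (hasDerivAt_eulerPrimitive hκ.le hw hr.1)).congr_deriv ?_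
    rw [Prod.mk.eta, ← hG r hr]
    simp only [linearSol, add_sub_cancel_left]
    match_scalars <;> ring

theorem exists_of_lipschitzWith [CompleteSpace E] (hκ : 0 < κ) {R : ℝ} (hR : 0 ≤ R)
    {K : ℝ≥0} (hGc : Continuous (Function.uncurry G)) (hG : ∀ r ∈ Icc 0 R, LipschitzWith K (G r))
    (μ : E) : ∃ u p, Continuous u ∧ Continuous p ∧ IsFuchsianSolOn κ G μ R u p := by
  obtain ⟨w, hw, hfix⟩ := (isVolterraOperator_linearSol hκ μ).exists_fixedPoint hR hGc hG
  have hc := continuous_linearSol hκ.le μ hw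
  exact ⟨_, _, hc.fst, hc.snd, of_linearSol hκ μ hw fun r hr => hfix r (Ioo_subset_Icc_self hr)⟩

end Existence

section Uniqueness

variable [NormedAddCommGroup E] [InnerProductSpace ℝ E] {κ T : ℝ} {G : ℝ → E × E → E} {μ : E}
  {u p u' p' : ℝ → E} {K : ℝ≥0}

lemma inner_add_inner_le_mul_norm_sq (hκ : 0 < κ) {a b x y f : E}
    (hx : x = κ • a + y) (hy : y = b - a) (hf : ‖f‖ ≤ K * ‖(a, b)‖) {c : ℝ} (hc : 0 ≤ c) :
    2 * inner ℝ x f + 2 * inner ℝ y (-c • y + f) ≤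
      4 * (K * (κ⁻¹ + 1)) * (‖x‖ ^ 2 + ‖y‖ ^ 2) := by
  have ha : ‖a‖ ≤ κ⁻¹ * (‖x‖ + ‖y‖) := by
    have : a = κ⁻¹ • (x - y) := by rw [hx, add_sub_cancel_right, inv_smul_smul₀ hκ.ne']
    rw [this, norm_smul, Real.norm_of_nonneg (inv_nonneg.2 hκ.le)]
    gcongr
    exact norm_sub_le x y
  have hb : ‖b‖ ≤ ‖a‖ + ‖y‖ := by
    simpa only [hy, add_sub_cancel] using norm_add_le a (b - a)
  have hab : ‖(a, b)‖ ≤ (κ⁻¹ + 1) * (‖x‖ + ‖y‖) := by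
    rw [Prod.norm_def]
    exact max_le (by linarith [norm_nonneg x, norm_nonneg y]) (by linarith [norm_nonneg x])
  have hdiss : inner ℝ y (-c • y + f) ≤ ‖y‖ * ‖f‖ := by
    rw [inner_add_right, inner_smul_right, real_inner_self_eq_norm_sq]
    linarith [real_inner_le_norm y f, mul_nonneg hc (sq_nonneg ‖y‖)]
  calc 2 * inner ℝ x f + 2 * inner ℝ y (-c • y + f)
      ≤ 2 * (‖x‖ + ‖y‖) * ‖f‖ := by linarith [real_inner_le_norm x f]
    _ ≤ 2 * (‖x‖ + ‖y‖) * (K * ((κ⁻¹ + 1) * (‖x‖ + ‖y‖))) := by gcongr; exact hf.trans (by gcongr)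
    _ = 2 * (K * (κ⁻¹ + 1)) * (‖x‖ + ‖y‖) ^ 2 := by ring
    _ ≤ 2 * (K * (κ⁻¹ + 1)) * (2 * (‖x‖ ^ 2 + ‖y‖ ^ 2)) := by gcongr; exact add_sq_le
    _ = 4 * (K * (κ⁻¹ + 1)) * (‖x‖ ^ 2 + ‖y‖ ^ 2) := by ring

-- In the variables `y = p - u` and `x = κ u + y` the system reads `x' = G`, `y' = -(κ / r) y + G`:
-- the singular term only dissipates the energy `‖x‖² + ‖y‖²`.
lemma eqOn_zero (h : IsFuchsianSolOn κ G 0 T u p) (hκ : 0 < κ)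
    (hG : ∀ r ∈ Ioo 0 T, ‖G r (u r, p r)‖ ≤ K * ‖(u r, p r)‖) :
    EqOn u 0 (Ico 0 T) ∧ EqOn p 0 (Ico 0 T) := by
  let y (r : ℝ) : E := p r - u r
  let x (r : ℝ) : E := κ • u r + y r
  have hy (r) (hr : r ∈ Ioo 0 T) : HasDerivAt y (-(κ / r) • y r + G r (u r, p r)) r := by
    refine ((h.hasDerivAt_snd r hr).sub (h.hasDerivAt_fst r hr)).congr_deriv ?_
    match_scalars <;> ring
  have hx (r) (hr : r ∈ Ioo 0 T) : HasDerivAt x (G r (u r, p r)) r := by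
    refine (((h.hasDerivAt_fst r hr).const_smul κ).add (hy r hr)).congr_deriv ?_
    match_scalars <;> ring
  have hyc : ContinuousOn y (Ico 0 T) := h.continuousOn_snd.sub h.continuousOn_fst
  have hxc : ContinuousOn x (Ico 0 T) := (h.continuousOn_fst.const_smul κ).add hyc
  have henergy (r) (hr : r ∈ Ico 0 T) : ‖x r‖ ^ 2 + ‖y r‖ ^ 2 ≤ 0 := by
    refine (le_mul_exp_of_hasDerivAt_le_mul (C := 4 * (K * (κ⁻¹ + 1)))
      ((hxc.norm.pow 2).add (hyc.norm.pow 2))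
      (fun r hr => (hx r hr).norm_sq.add (hy r hr).norm_sq) (fun r hr => ?_) hr).trans_eq ?_
    · exact inner_add_inner_le_mul_norm_sq hκ rfl rfl (hG r hr) (div_nonneg hκ.le hr.1.le)
    · simp [x, y, h.fst_zero, h.snd_zero]
  have hyr (r) (hr : r ∈ Ico 0 T) : y r = 0 := norm_eq_zero.1
    (by nlinarith [henergy r hr, sq_nonneg ‖x r‖, norm_nonneg (y r)])
  have hur (r) (hr : r ∈ Ico 0 T) : u r = 0 := by
    have hx0 : x r = 0 := norm_eq_zero.1
      (by nlinarith [henergy r hr, sq_nonneg ‖y r‖, norm_nonneg (x r)])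
    simpa only [x, hyr r hr, add_zero, smul_eq_zero, hκ.ne', false_or] using hx0
  exact ⟨hur, fun r hr => (sub_eq_zero.1 (hyr r hr)).trans (hur r hr)⟩

theorem eqOn_of_lipschitzOnWith (h : IsFuchsianSolOn κ G μ T u p)
    (h' : IsFuchsianSolOn κ G μ T u' p') (hκ : 0 < κ) {s : ℝ → Set (E × E)}
    (hG : ∀ r ∈ Ioo 0 T, LipschitzOnWith K (G r) (s r))
    (hs : ∀ r ∈ Ioo 0 T, (u r, p r) ∈ s r) (hs' : ∀ r ∈ Ioo 0 T, (u' r, p' r) ∈ s r) :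
    EqOn u u' (Ico 0 T) ∧ EqOn p p' (Ico 0 T) := by
  have hsub := h.sub h'
  rw [sub_self] at hsub
  obtain ⟨hu, hp⟩ := hsub.eqOn_zero hκ fun r hr => (hG r hr).norm_sub_le (hs r hr) (hs' r hr)
  exact ⟨fun r hr => sub_eq_zero.1 (hu hr), fun r hr => sub_eq_zero.1 (hp hr)⟩

end Uniqueness

end IsFuchsianSolOn

end Fuchsian

section Forcing

/-- The regular part of the equation: with `h = 1 + r u` and `p = h'`, the equation for `h` reads
`p' = -(m / (2 r)) (p - u) + forcing m lam r (u, p)`, where `m = n - 1`. -/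
noncomputable def forcing (m lam r : ℝ) (x : ℝ × ℝ) : ℝ :=
  x.2 * (x.2 - lam + m * x.1) / (2 * (1 + r * x.1))

/-- The pairs `(u, p)` bounded by `M` for which `h = 1 + r u` is at least `η`; for `η > 0` the
forcing term is Lipschitz on this set. -/
def admissible (M η r : ℝ) : Set (ℝ × ℝ) :=
  {x | |x.1| ≤ M ∧ |x.2| ≤ M ∧ η ≤ 1 + r * x.1}

variable {M η r : ℝ}

lemma admissible_mono {M' η' : ℝ} (hM : M ≤ M') (hη : η' ≤ η) :
    admissible M η r ⊆ admissible M' η' r :=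
  fun _ hx => ⟨hx.1.trans hM, hx.2.1.trans hM, hη.trans hx.2.2⟩

lemma isClosed_setOf_mem_admissible {u p : ℝ → ℝ} (hu : Continuous u) (hp : Continuous p)
    (M η : ℝ) : IsClosed {r | (u r, p r) ∈ admissible M η r} :=
  (isClosed_le hu.abs continuous_const).inter <|
    (isClosed_le hp.abs continuous_const).inter <|
      isClosed_le continuous_const (continuous_const.add (continuous_id.mul hu))

lemma eventually_mem_admissible {u p : ℝ → ℝ} (hu : Continuous u) (hp : Continuous p) (hη : 0 < η)
    (hr : (u r, p r) ∈ admissible M η r) :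
    ∀ᶠ s in 𝓝 r, (u s, p s) ∈ admissible (M + 1) (η / 2) s := by
  have hh : Continuous fun s => 1 + s * u s := by fun_prop
  filter_upwards [hu.abs.continuousAt.eventually_lt_const (hr.1.trans_lt (lt_add_one M)),
    hp.abs.continuousAt.eventually_lt_const (hr.2.1.trans_lt (lt_add_one M)),
    hh.continuousAt.eventually_const_lt ((half_lt_self hη).trans_le hr.2.2)] with s hus hps hhs
  exact ⟨hus.le, hps.le, hhs.le⟩

-- On a box `φ (h, u, p) = p (p - lam + m u) / (2 h)` is Lipschitz and extends to a Lipschitz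
-- function on the whole space; `G` is this extension evaluated at `h = 1 + r u`.
lemma exists_lipschitzWith_eqOn_forcing (m lam M : ℝ) {R : ℝ} (hη : 0 < η) :
    ∃ (K : ℝ≥0) (G : ℝ → ℝ × ℝ → ℝ), Continuous (Function.uncurry G) ∧
      ∀ r ∈ Icc 0 R, LipschitzWith K (G r) ∧ EqOn (G r) (forcing m lam r) (admissible M η r) := by
  let φ (x : ℝ × ℝ × ℝ) : ℝ := x.2.2 * (x.2.2 - lam + m * x.2.1) / (2 * x.1)
  let box : Set (ℝ × ℝ × ℝ) := Icc (η, -M, -M) (1 + R * M, M, M)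
  have hφ : ContDiffOn ℝ 1 φ box := by
    refine ContDiffOn.div (by fun_prop) (by fun_prop) fun x hx => ?_
    have : 0 < x.1 := hη.trans_le hx.1.1
    positivity
  obtain ⟨K, hK⟩ := hφ.exists_lipschitzOnWith one_ne_zero (convex_Icc _ _) isCompact_Icc
  obtain ⟨g, hg, hgφ⟩ := hK.extend_real
  let ι (r : ℝ) (x : ℝ × ℝ) : ℝ × ℝ × ℝ := (1 + r * x.1, x)
  have hι (r) (hr : r ∈ Icc 0 R) : LipschitzWith (max R.toNNReal 1) (ι r) := by
    refine LipschitzWith.prodMk (LipschitzWith.of_dist_le_mul fun x y => ?_) LipschitzWith.id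
    rw [Real.coe_toNNReal _ (hr.1.trans hr.2), dist_add_left, Real.dist_eq, ← mul_sub, abs_mul,
      abs_of_nonneg hr.1, ← Real.dist_eq]
    gcongr
    exacts [hr.1.trans hr.2, hr.2, le_max_left _ _]
  refine ⟨K * max R.toNNReal 1, fun r x => g (ι r x), ?_, fun r hr => ⟨hg.comp (hι r hr), ?_⟩⟩
  · exact hg.continuous.comp (by fun_prop)
  · intro x hx
    obtain ⟨hlu, huu⟩ := abs_le.1 hx.1
    obtain ⟨hlp, hup⟩ := abs_le.1 hx.2.1
    have hM : 0 ≤ M := (abs_nonneg _).trans hx.1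
    have hh : r * x.1 ≤ R * M :=
      (mul_le_mul_of_nonneg_left huu hr.1).trans (mul_le_mul_of_nonneg_right hr.2 hM)
    exact (hgφ ⟨⟨hx.2.2, hlu, hlp⟩, add_le_add_right hh 1, huu, hup⟩).symm

lemma exists_lipschitzOnWith_forcing (m lam M : ℝ) {R : ℝ} (hη : 0 < η) :
    ∃ K : ℝ≥0, ∀ r ∈ Icc 0 R, LipschitzOnWith K (forcing m lam r) (admissible M η r) := by
  obtain ⟨K, G, -, hG⟩ := exists_lipschitzWith_eqOn_forcing m lam M (R := R) hη
  exact ⟨K, fun r hr x hx y hy => by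
    simpa only [(hG r hr).2 hx, (hG r hr).2 hy] using (hG r hr).1 x y⟩

end Forcing

section Profile

/-- The unknown `h = 1 + r u` of the equation, in terms of its difference quotient
`u = (h - 1) / r`. -/
def profile (u : ℝ → ℝ) (r : ℝ) : ℝ :=
  1 + r * u r

@[simp]
lemma profile_zero (u : ℝ → ℝ) : profile u 0 = 1 := by
  simp [profile]

/-- First-order form of the initial value problem on `[0, T)` with `m = n - 1`: `h = profile u` is
positive, `p = h'`, and both `u` and `p` take the value `μ = h'(0)` at `0`. -/
structure IsProfileSolOn (m lam μ T : ℝ) (u p : ℝ → ℝ) : Prop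
    extends IsFuchsianSolOn (1 + m / 2) (forcing m lam) μ T u p where
  pos : ∀ r ∈ Ico 0 T, 0 < profile u r

namespace IsProfileSolOn

variable {m lam μ T : ℝ} {u p : ℝ → ℝ}

lemma mono (h : IsProfileSolOn m lam μ T u p) {T' : ℝ} (hT : T' ≤ T) :
    IsProfileSolOn m lam μ T' u p :=
  ⟨h.toIsFuchsianSolOn.mono hT, fun r hr => h.pos r (Ico_subset_Ico_right hT hr)⟩

lemma congr (h : IsProfileSolOn m lam μ T u p) {u' p' : ℝ → ℝ} (hT : 0 < T)
    (hu : EqOn u' u (Ico 0 T)) (hp : EqOn p' p (Ico 0 T)) : IsProfileSolOn m lam μ T u' p' :=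
  ⟨h.toIsFuchsianSolOn.congr hT hu hp, fun r hr => by simpa only [profile, hu hr] using h.pos r hr⟩

lemma of_forall_lt (hT : 0 < T) (h : ∀ S ∈ Ioo 0 T, IsProfileSolOn m lam μ S u p) :
    IsProfileSolOn m lam μ T u p := by
  refine ⟨IsFuchsianSolOn.of_forall_lt hT fun S hS => (h S hS).toIsFuchsianSolOn, fun r hr => ?_⟩
  obtain ⟨S, hrS, hST⟩ := exists_between hr.2
  exact (h S ⟨hr.1.trans_lt hrS, hST⟩).pos r ⟨hr.1, hrS⟩

lemma continuousOn_profile (h : IsProfileSolOn m lam μ T u p) :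
    ContinuousOn (profile u) (Ico 0 T) :=
  continuousOn_const.add (continuousOn_id.mul h.continuousOn_fst)

lemma hasDerivAt_profile (h : IsProfileSolOn m lam μ T u p) {r : ℝ} (hr : r ∈ Ioo 0 T) :
    HasDerivAt (profile u) (p r) r := by
  refine (((hasDerivAt_id r).mul (h.hasDerivAt_fst r hr)).const_add 1).congr_deriv ?_
  have := hr.1.ne'
  simp only [id, smul_eq_mul]
  field_simp
  ring

lemma hasDerivWithinAt_profile (h : IsProfileSolOn m lam μ T u p) {r : ℝ} (hr : r ∈ Ico 0 T) :
    HasDerivWithinAt (profile u) (p r) (Ici r) r := by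
  obtain rfl | hr0 := hr.1.eq_or_lt
  · rw [hasDerivWithinAt_iff_tendsto_slope, Ici_sdiff_left, h.snd_zero, ← h.fst_zero]
    have hu : Tendsto u (𝓝[>] 0) (𝓝 (u 0)) := by
      rw [← nhdsWithin_Ioo_eq_nhdsGT hr.2]
      exact (h.continuousOn_fst 0 hr).mono Ioo_subset_Ico_self
    refine hu.congr' ?_
    filter_upwards [self_mem_nhdsWithin] with s hs
    rw [slope_def_field, profile_zero, profile, add_sub_cancel_left, sub_zero,
      mul_div_cancel_left₀ _ (ne_of_gt hs)]
  · exact (h.hasDerivAt_profile ⟨hr0, hr.2⟩).hasDerivWithinAt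

lemma hasDerivAt_deriv_profile (h : IsProfileSolOn m lam μ T u p) {r : ℝ} (hr : r ∈ Ioo 0 T) :
    HasDerivAt p (m * (profile u r - 1) / (2 * r ^ 2) + p r ^ 2 / (2 * profile u r) -
      (m + lam * r) * p r / (2 * r * profile u r)) r := by
  refine (h.hasDerivAt_snd r hr).congr_deriv ?_
  have hr0 := hr.1.ne'
  have hpos := (h.pos r (Ioo_subset_Ico_self hr)).ne'
  unfold profile at *
  simp only [forcing, smul_eq_mul]
  field_simp
  ring

lemma exists_mem_admissible (h : IsProfileSolOn m lam μ T u p) {S : ℝ} (hS : S < T) :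
    ∃ M, ∃ η > 0, ∀ r ∈ Icc 0 S, (u r, p r) ∈ admissible M η r := by
  have hsub : Icc 0 S ⊆ Ico 0 T := Icc_subset_Ico_right hS
  obtain ⟨Mu, hMu⟩ := isCompact_Icc.exists_bound_of_continuousOn (h.continuousOn_fst.mono hsub)
  obtain ⟨Mp, hMp⟩ := isCompact_Icc.exists_bound_of_continuousOn (h.continuousOn_snd.mono hsub)
  obtain ⟨η, hη, hle⟩ := isCompact_Icc.exists_forall_le' (h.continuousOn_profile.mono hsub)
    fun r hr => h.pos r (hsub hr)
  exact ⟨max Mu Mp, η, hη, fun r hr =>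
    ⟨(hMu r hr).trans (le_max_left _ _), (hMp r hr).trans (le_max_right _ _), hle r hr⟩⟩

theorem eq_of_mem (h : IsProfileSolOn m lam μ T u p) (hm : 0 < m) {T' : ℝ} {u' p' : ℝ → ℝ}
    (h' : IsProfileSolOn m lam μ T' u' p') {r : ℝ} (hr : r ∈ Ico 0 T) (hr' : r < T') :
    u r = u' r ∧ p r = p' r := by
  obtain ⟨S, hrS, hS⟩ := exists_between (lt_min hr.2 hr')
  obtain ⟨hST, hST'⟩ := lt_min_iff.1 hS
  obtain ⟨M, η, hη, hadm⟩ := h.exists_mem_admissible hST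
  obtain ⟨M', η', hη', hadm'⟩ := h'.exists_mem_admissible hST'
  obtain ⟨K, hK⟩ := exists_lipschitzOnWith_forcing m lam (max M M') (R := S) (lt_min hη hη')
  obtain ⟨hu, hp⟩ := (h.toIsFuchsianSolOn.mono hST.le).eqOn_of_lipschitzOnWith
    (h'.toIsFuchsianSolOn.mono hST'.le) (by positivity)
    (fun s hs => hK s (Ioo_subset_Icc_self hs))
    (fun s hs => admissible_mono (le_max_left _ _) (min_le_left _ _)
      (hadm s (Ioo_subset_Icc_self hs)))
    (fun s hs => admissible_mono (le_max_right _ _) (min_le_right _ _)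
      (hadm' s (Ioo_subset_Icc_self hs)))
  exact ⟨hu ⟨hr.1, hrS⟩, hp ⟨hr.1, hrS⟩⟩

section Existence

variable {M η R : ℝ}

lemma exists_of_mem_admissible (hm : 0 < m) (lam μ M : ℝ) (hη : 0 < η) (hR : 0 ≤ R) :
    ∃ u p, Continuous u ∧ Continuous p ∧ u 0 = μ ∧ p 0 = μ ∧ ∀ T ≤ R,
      (∀ r ∈ Ico 0 T, (u r, p r) ∈ admissible M η r) → IsProfileSolOn m lam μ T u p := by
  obtain ⟨K, G, hGc, hG⟩ := exists_lipschitzWith_eqOn_forcing m lam M (R := R) hη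
  obtain ⟨u, p, hu, hp, hsol⟩ := IsFuchsianSolOn.exists_of_lipschitzWith
    (by positivity : 0 < 1 + m / 2) hR hGc (fun r hr => (hG r hr).1) μ
  refine ⟨u, p, hu, hp, hsol.fst_zero, hsol.snd_zero, fun T hT hadm =>
    ⟨(hsol.mono hT).congr_field fun r hr => ?_, fun r hr => hη.trans_le (hadm r hr).2.2⟩⟩
  exact (hG r ⟨hr.1.le, hr.2.le.trans hT⟩).2 (hadm r (Ioo_subset_Ico_self hr))

lemma exists_local (hm : 0 < m) (lam μ : ℝ) : ∃ T > 0, ∃ u p, IsProfileSolOn m lam μ T u p := by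
  obtain ⟨u, p, hu, hp, hu0, hp0, hsol⟩ :=
    exists_of_mem_admissible hm lam μ (|μ| + 1) one_half_pos zero_le_one
  have hadm0 : (u 0, p 0) ∈ admissible |μ| 1 0 := by simp [admissible, hu0, hp0]
  obtain ⟨ε, hε, hadm⟩ := Metric.eventually_nhds_iff.1
    (eventually_mem_admissible hu hp one_pos hadm0)
  refine ⟨min 1 ε, lt_min one_pos hε, u, p, hsol _ (min_le_left _ _) fun r hr => hadm ?_⟩
  rw [Real.dist_0_eq_abs, abs_of_nonneg hr.1]
  exact hr.2.trans_le (min_le_right _ _)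

theorem exists_of_forall_mem_admissible (hm : 0 < m) (hR : 0 < R) (hη : 0 < η)
    (hbound : ∀ T ∈ Ioc 0 R, ∀ u p, IsProfileSolOn m lam μ T u p →
      ∀ r ∈ Ico 0 T, (u r, p r) ∈ admissible M η r) :
    ∃ u p, IsProfileSolOn m lam μ R u p := by
  obtain ⟨u, p, hu, hp, hu0, hp0, hsol⟩ :=
    exists_of_mem_admissible hm lam μ (M + 1) (half_pos hη) hR.le
  refine ⟨u, p, hsol R le_rfl fun r hr => ?_⟩
  have hzero : (u 0, p 0) ∈ admissible M η 0 := by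
    obtain ⟨T, hT, v, q, hloc⟩ := exists_local hm lam μ
    rw [hu0, hp0]
    have := hbound _ ⟨lt_min hT hR, min_le_right _ _⟩ v q (hloc.mono (min_le_left _ _)) 0
      (left_mem_Ico.2 (lt_min hT hR))
    rwa [hloc.fst_zero, hloc.snd_zero] at this
  have hend (T) (hT : T ∈ Ico 0 R)
      (hadm : ∀ r ∈ Ico 0 T, (u r, p r) ∈ admissible (M + 1) (η / 2) r) :
      (u T, p T) ∈ admissible M η T := by
    obtain rfl | hT0 := hT.1.eq_or_lt
    · exact hzero
    · refine (isClosed_setOf_mem_admissible hu hp M η).closure_subset_iff.2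
        (hbound T ⟨hT0, hT.2.le⟩ u p (hsol T hT.2.le hadm)) ?_
      rw [closure_Ico hT0.ne]
      exact right_mem_Icc.2 hT.1
  have hall : Icc 0 R ⊆ {r | (u r, p r) ∈ admissible (M + 1) (η / 2) r} := by
    refine IsClosed.Icc_subset_of_forall_mem_nhdsGT_of_Icc_subset
      ((isClosed_setOf_mem_admissible hu hp _ _).inter isClosed_Icc)
      (admissible_mono (lt_add_one M).le (half_le_self hη.le) hzero) fun T hT hadm => ?_
    exact mem_nhdsWithin_of_mem_nhds <| eventually_mem_admissible hu hp hη <|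
      hend T hT fun r hr => hadm (Ico_subset_Icc_self hr)
  exact hall (Ico_subset_Icc_self hr)

end Existence

section LowerBound

/-- A quantity that does not decrease along solutions and keeps `h` away from `0`: if `h` were
small, `p = h'` would have to be large. -/
noncomputable def logBarrier (m lam : ℝ) (u p : ℝ → ℝ) (r : ℝ) : ℝ :=
  p r + (m / (2 * r) + lam / 2) * Real.log (profile u r)

lemma hasDerivAt_logBarrier (h : IsProfileSolOn m lam μ T u p) {r : ℝ} (hr : r ∈ Ioo 0 T) :
    HasDerivAt (logBarrier m lam u p)
      (m / (2 * r ^ 2) * (profile u r - 1 - Real.log (profile u r)) +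
        p r ^ 2 / (2 * profile u r)) r := by
  have hr0 := hr.1.ne'
  have hpos := (h.pos r (Ioo_subset_Ico_self hr)).ne'
  have hcoeff : HasDerivAt (fun r : ℝ => m / (2 * r) + lam / 2) (-(m / (2 * r ^ 2))) r := by
    refine (((hasDerivAt_const r m).div ((hasDerivAt_id r).const_mul 2) (by simpa)).add_const
      (lam / 2)).congr_deriv ?_
    simp only [id]
    field_simp
    ring
  refine ((h.hasDerivAt_deriv_profile hr).add
    (hcoeff.mul ((h.hasDerivAt_profile hr).log hpos))).congr_deriv ?_
  field_simp
  ring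

lemma monotoneOn_logBarrier (h : IsProfileSolOn m lam μ T u p) (hm : 0 ≤ m) :
    MonotoneOn (logBarrier m lam u p) (Ioo 0 T) := by
  refine monotoneOn_of_hasDerivWithinAt_nonneg (convex_Ioo 0 T)
    (fun r hr => (h.hasDerivAt_logBarrier hr).continuousAt.continuousWithinAt)
    (fun r hr => (h.hasDerivAt_logBarrier (interior_subset hr)).hasDerivWithinAt) fun r hr => ?_
  have hpos := h.pos r (Ioo_subset_Ico_self (interior_subset hr))
  have hlog : 0 ≤ profile u r - 1 - Real.log (profile u r) :=
    sub_nonneg.2 (Real.log_le_sub_one_of_pos hpos)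
  positivity

lemma tendsto_logBarrier (h : IsProfileSolOn m lam μ T u p) (hT : 0 < T) :
    Tendsto (logBarrier m lam u p) (𝓝[>] 0) (𝓝 ((1 + m / 2) * μ)) := by
  have hmem : (0 : ℝ) ∈ Ico 0 T := left_mem_Ico.2 hT
  have hp : Tendsto p (𝓝[>] 0) (𝓝 μ) := by
    rw [← nhdsWithin_Ioo_eq_nhdsGT hT, ← h.snd_zero]
    exact (h.continuousOn_snd 0 hmem).mono Ioo_subset_Ico_self
  have hlog : Tendsto (fun r => Real.log (profile u r) / r) (𝓝[>] 0) (𝓝 μ) := by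
    have := (h.hasDerivWithinAt_profile hmem).log (by simp)
    rw [hasDerivWithinAt_iff_tendsto_slope, Ici_sdiff_left, h.snd_zero, profile_zero,
      div_one] at this
    simpa [slope_fun_def_field] using this
  have hcoeff : Tendsto (fun r : ℝ => (m + lam * r) / 2) (𝓝[>] 0) (𝓝 (m / 2)) := by
    have : Continuous fun r : ℝ => (m + lam * r) / 2 := by fun_prop
    simpa using this.continuousWithinAt.tendsto (x := 0) (s := Ioi 0)
  refine (hp.add (hcoeff.mul hlog)).congr' ?_ |>.trans_eq ?_
  · filter_upwards [self_mem_nhdsWithin] with r hr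
    have : r ≠ 0 := ne_of_gt hr
    rw [logBarrier]
    field_simp
  · ring_nf

lemma le_logBarrier (h : IsProfileSolOn m lam μ T u p) (hm : 0 ≤ m) {r : ℝ} (hr : r ∈ Ioo 0 T) :
    (1 + m / 2) * μ ≤ logBarrier m lam u p r := by
  refine le_of_tendsto (h.tendsto_logBarrier (hr.1.trans hr.2)) ?_
  filter_upwards [Ioo_mem_nhdsGT hr.1] with s hs
  exact h.monotoneOn_logBarrier hm ⟨hs.1, hs.2.trans hr.2⟩ hr hs.2.le

lemma le_profile_of_forall_pos (h : IsProfileSolOn m lam μ T u p) {η : ℝ} (hη : η ≤ 1)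
    (hpos : ∀ r ∈ Ico 0 T, profile u r = η → 0 < p r) {r : ℝ} (hr : r ∈ Ico 0 T) :
    η ≤ profile u r := by
  have hsub : Icc 0 r ⊆ Ico 0 T := Icc_subset_Ico_right hr.2
  refine neg_le_neg_iff.1 <| image_le_of_deriv_right_lt_deriv_boundary (f := fun s => -profile u s)
    (B := fun _ => -η) (h.continuousOn_profile.neg.mono hsub)
    (fun s hs => (h.hasDerivWithinAt_profile (hsub (Ico_subset_Icc_self hs))).neg) (by simpa)
    (fun s => hasDerivAt_const s (-η)) (fun s hs hsη => ?_) (right_mem_Icc.2 hr.1)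
  exact neg_lt_zero.2 (hpos s (hsub (Ico_subset_Icc_self hs)) (neg_inj.1 hsη))

lemma exists_forall_le_profile (hm : 0 ≤ m) (μ : ℝ) {R : ℝ} (hR : 0 < R) (hq : 0 < m + lam * R) :
    ∃ η > 0, ∀ T ≤ R, ∀ u p, IsProfileSolOn m lam μ T u p → ∀ r ∈ Ico 0 T, η ≤ profile u r := by
  set a := m / (2 * R) + lam / 2 with ha
  have ha0 : 0 < a := by
    have : a = (m + lam * R) / (2 * R) := by rw [ha]; field_simp
    rw [this]
    positivity
  set b := ((1 + m / 2) * |μ| + 1) / a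
  have hb0 : 0 < b := by positivity
  have hab : a * b = (1 + m / 2) * |μ| + 1 := mul_div_cancel₀ _ ha0.ne'
  refine ⟨Real.exp (-b), Real.exp_pos _, fun T hT u p h r hr =>
    h.le_profile_of_forall_pos (Real.exp_le_one_iff.2 (by linarith)) (fun s hs hsb => ?_) hr⟩
  have hs0 : 0 < s := by
    refine hs.1.lt_of_ne fun h0 => hb0.ne' ?_
    rw [← h0, profile_zero, eq_comm, Real.exp_eq_one_iff] at hsb
    linarith
  have hbarrier := h.le_logBarrier hm ⟨hs0, hs.2⟩
  rw [logBarrier, hsb, Real.log_exp] at hbarrier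
  have hcoeff : a * b ≤ (m / (2 * s) + lam / 2) * b := by
    have : s ≤ R := hs.2.le.trans hT
    refine mul_le_mul_of_nonneg_right ?_ hb0.le
    rw [ha]
    gcongr
  have hμ : -((1 + m / 2) * |μ|) ≤ (1 + m / 2) * μ := by
    rw [← mul_neg]
    gcongr
    exact neg_abs_le μ
  linarith

end LowerBound

section EnergyBound

/-- Away from `r = 0` and as long as `h` stays away from `0`, the growth of `h` and `p = h'` is
controlled by this energy. -/
noncomputable def energy (u p : ℝ → ℝ) (r : ℝ) : ℝ :=
  1 + profile u r + p r ^ 2 / (4 * profile u r)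

variable {r r₀ η : ℝ}

lemma abs_profile_sub_one_le_energy (hr : 0 < profile u r) : |profile u r - 1| ≤ energy u p r := by
  have : 0 ≤ p r ^ 2 / (4 * profile u r) := by positivity
  unfold energy
  exact abs_le.2 ⟨by linarith, by linarith⟩

lemma abs_snd_le_energy (hr : 0 < profile u r) : |p r| ≤ energy u p r := by
  have : 0 ≤ (2 * profile u r - |p r|) ^ 2 / (4 * profile u r) := by positivity
  have heq : energy u p r - |p r| = 1 + (2 * profile u r - |p r|) ^ 2 / (4 * profile u r) := by
    rw [energy, ← sq_abs (p r)]
    field_simp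
    ring
  linarith

lemma mem_admissible_of_energy_le {E : ℝ} (hr₀ : 0 < r₀) (hr : r₀ ≤ r) (hη : 0 < η)
    (hle : η ≤ profile u r) (hE : energy u p r ≤ E) :
    (u r, p r) ∈ admissible (max E (E / r₀)) η r := by
  have hr0 : 0 < r := hr₀.trans_le hr
  have hpos := hη.trans_le hle
  have hu : |u r| ≤ E / r₀ := by
    have heq : u r = (profile u r - 1) / r := by
      rw [profile, add_sub_cancel_left, mul_div_cancel_left₀ _ hr0.ne']
    have hh := (abs_profile_sub_one_le_energy (p := p) hpos).trans hE
    rw [heq, abs_div, abs_of_pos hr0]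
    exact div_le_div₀ ((abs_nonneg _).trans hh) hh hr₀ hr
  exact ⟨hu.trans (le_max_right _ _), ((abs_snd_le_energy hpos).trans hE).trans (le_max_left _ _),
    hle⟩

lemma hasDerivAt_energy (h : IsProfileSolOn m lam μ T u p) (hr : r ∈ Ioo 0 T) :
    HasDerivAt (energy u p)
      (p r + m / (4 * r ^ 2) * (p r * (1 - (profile u r)⁻¹)) -
        (m + lam * r) * p r ^ 2 / (4 * r * profile u r ^ 2)) r := by
  have hr0 := hr.1.ne'
  have hpos := (h.pos r (Ioo_subset_Ico_self hr)).ne'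
  have hh := h.hasDerivAt_profile hr
  refine ((hh.const_add 1).add (((h.hasDerivAt_deriv_profile hr).pow 2).div (hh.const_mul 4)
    (by simpa using hpos))).congr_deriv ?_
  simp only [Pi.pow_apply]
  field_simp
  ring

lemma energy_le_mul_exp (h : IsProfileSolOn m lam μ T u p) (hm : 0 ≤ m)
    (hq : ∀ s ∈ Ico 0 T, 0 ≤ m + lam * s) (hη : 0 < η)
    (hle : ∀ s ∈ Ico 0 T, η ≤ profile u s) (hr₀ : 0 < r₀) (hr : r ∈ Ico r₀ T) :
    energy u p r ≤
      energy u p r₀ * Real.exp ((1 + m / (4 * r₀ ^ 2) * (1 + η⁻¹)) * (r - r₀)) := by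
  have hmem {s} (hs : s ∈ Ico r₀ T) : s ∈ Ioo 0 T := ⟨hr₀.trans_le hs.1, hs.2⟩
  refine le_mul_exp_of_hasDerivAt_le_mul
    (fun s hs => (h.hasDerivAt_energy (hmem hs)).continuousAt.continuousWithinAt)
    (fun s hs => h.hasDerivAt_energy (hmem (Ioo_subset_Ico_self hs))) (fun s hs => ?_) hr
  have hs0 : 0 < s := hr₀.trans hs.1
  have hsT : s ∈ Ico 0 T := ⟨hs0.le, hs.2⟩
  have hpos := h.pos s hsT
  have hp := abs_snd_le_energy (p := p) hpos
  have hinv : |1 - (profile u s)⁻¹| ≤ 1 + η⁻¹ := by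
    have : (profile u s)⁻¹ ≤ η⁻¹ := inv_anti₀ hη (hle s hsT)
    have : 0 < (profile u s)⁻¹ := inv_pos.2 hpos
    exact abs_le.2 ⟨by linarith, by linarith⟩
  have hE : 0 ≤ energy u p s := (abs_nonneg _).trans hp
  have hdamp : 0 ≤ (m + lam * s) * p s ^ 2 / (4 * s * profile u s ^ 2) := by
    have := hq s hsT
    positivity
  calc p s + m / (4 * s ^ 2) * (p s * (1 - (profile u s)⁻¹)) -
        (m + lam * s) * p s ^ 2 / (4 * s * profile u s ^ 2)
      ≤ |p s| + m / (4 * s ^ 2) * (|p s| * |1 - (profile u s)⁻¹|) := by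
        rw [← abs_mul]
        refine (sub_le_self _ hdamp).trans ?_
        gcongr <;> exact le_abs_self _
    _ ≤ energy u p s + m / (4 * r₀ ^ 2) * (energy u p s * (1 + η⁻¹)) := by
        gcongr
        exact hs.1.le
    _ = (1 + m / (4 * r₀ ^ 2) * (1 + η⁻¹)) * energy u p s := by ring

end EnergyBound

section GlobalExistence

variable {L R : ℝ}

lemma add_mul_pos_of_mem_Ico (hm : 0 < m) (hq : 0 ≤ m + lam * L) {r : ℝ} (hr : r ∈ Ico 0 L) :
    0 < m + lam * r := by
  have hL : 0 < L := hr.1.trans_lt hr.2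
  refine pos_of_mul_pos_right (b := m + lam * r) (a := L) ?_ hL.le
  calc 0 < (L - r) * m + r * (m + lam * L) :=
        add_pos_of_pos_of_nonneg (mul_pos (sub_pos.2 hr.2) hm) (mul_nonneg hr.1 hq)
    _ = L * (m + lam * r) := by ring

-- Near `r = 0`, where the energy estimate degenerates, every solution agrees with a fixed local
-- one.
lemma exists_forall_mem_admissible (hm : 0 < m) (μ : ℝ) (hR : 0 < R) (hq : 0 < m + lam * R) :
    ∃ M, ∃ η > 0, ∀ T ∈ Ioc 0 R, ∀ u p, IsProfileSolOn m lam μ T u p →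
      ∀ r ∈ Ico 0 T, (u r, p r) ∈ admissible M η r := by
  obtain ⟨η, hη, hle⟩ := exists_forall_le_profile hm.le μ hR hq
  obtain ⟨T₀, hT₀, v, q, hloc⟩ := exists_local hm lam μ
  set r₀ := T₀ / 2
  have hr₀ : 0 < r₀ := half_pos hT₀
  have hr₀T₀ : r₀ < T₀ := half_lt_self hT₀
  obtain ⟨M, _, -, hM⟩ := hloc.exists_mem_admissible hr₀T₀
  set C := 1 + m / (4 * r₀ ^ 2) * (1 + η⁻¹)
  set E := energy v q r₀ * Real.exp (C * R) with hE
  refine ⟨max M (max E (E / r₀)), η, hη, fun T hT u p h r hr => ?_⟩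
  have hleη := hle T hT.2 u p h
  obtain hrr₀ | hrr₀ := le_or_gt r r₀
  · obtain ⟨hu, hp⟩ := h.eq_of_mem hm hloc hr (hrr₀.trans_lt hr₀T₀)
    obtain ⟨hMu, hMp, -⟩ := hM r ⟨hr.1, hrr₀⟩
    exact ⟨(hu ▸ hMu).trans (le_max_left _ _), (hp ▸ hMp).trans (le_max_left _ _), hleη r hr⟩
  · refine admissible_mono (le_max_right _ _) le_rfl
      (mem_admissible_of_energy_le hr₀ hrr₀.le hη (hleη r hr) ?_)
    obtain ⟨hu, hp⟩ := h.eq_of_mem hm hloc ⟨hr₀.le, hrr₀.trans hr.2⟩ hr₀T₀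
    have hE₀ : energy u p r₀ = energy v q r₀ := by simp only [energy, profile, hu, hp]
    have hE₀0 : 0 ≤ energy v q r₀ := (abs_nonneg _).trans
      (abs_snd_le_energy (hloc.pos r₀ ⟨hr₀.le, hr₀T₀⟩))
    refine (h.energy_le_mul_exp hm.le (fun s hs => (add_mul_pos_of_mem_Ico hm hq.le
      ⟨hs.1, hs.2.trans_le hT.2⟩).le) hη hleη hr₀ ⟨hrr₀.le, hr.2⟩).trans ?_
    rw [hE₀, hE]
    have : r - r₀ ≤ R := by linarith [hr.2, hT.2]
    gcongr

lemma exists_of_forall_lt (hm : 0 < m) (hL : 0 < L)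
    (hex : ∀ T ∈ Ioo 0 L, ∃ u p, IsProfileSolOn m lam μ T u p) :
    ∃ u p, IsProfileSolOn m lam μ L u p := by
  choose! v q hvq using hex
  have hmid {r} (hr : r ∈ Ico 0 L) : (r + L) / 2 ∈ Ioo 0 L :=
    ⟨by linarith [hr.1], by linarith [hr.2]⟩
  have hagree (T) (hT : T ∈ Ioo 0 L) (r) (hr : r ∈ Ico 0 T) :
      v ((r + L) / 2) r = v T r ∧ q ((r + L) / 2) r = q T r := by
    have hrL : r ∈ Ico 0 L := ⟨hr.1, hr.2.trans hT.2⟩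
    exact (hvq _ (hmid hrL)).eq_of_mem hm (hvq T hT) ⟨hr.1, by linarith [hrL.2]⟩ hr.2
  exact ⟨fun r => v ((r + L) / 2) r, fun r => q ((r + L) / 2) r, of_forall_lt hL fun T hT =>
    (hvq T hT).congr hT.1 (fun r hr => (hagree T hT r hr).1) fun r hr => (hagree T hT r hr).2⟩

theorem exists_of_add_mul_nonneg (hm : 0 < m) (μ : ℝ) (hL : 0 < L) (hq : 0 ≤ m + lam * L) :
    ∃ u p, IsProfileSolOn m lam μ L u p := by
  refine exists_of_forall_lt hm hL fun T hT => ?_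
  obtain ⟨M, η, hη, hbound⟩ := exists_forall_mem_admissible hm μ hT.1
    (add_mul_pos_of_mem_Ico hm hq (Ioo_subset_Ico_self hT))
  exact exists_of_forall_mem_admissible hm hT.1 hη hbound

end GlobalExistence

section ToSecondOrder

lemma contDiffOn_two_profile (h : IsProfileSolOn m lam μ T u p) :
    ContDiffOn ℝ 2 (profile u) (Ioo 0 T) := by
  have hh : ContinuousOn (profile u) (Ioo 0 T) := h.continuousOn_profile.mono Ioo_subset_Ico_self
  have hp : ContinuousOn p (Ioo 0 T) := h.continuousOn_snd.mono Ioo_subset_Ico_self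
  have hp1 : ContDiffOn ℝ 1 p (Ioo 0 T) := by
    rw [← zero_add (1 : WithTop ℕ∞), contDiffOn_succ_iff_deriv_of_isOpen isOpen_Ioo,
      contDiffOn_zero]
    refine ⟨fun r hr => (h.hasDerivAt_deriv_profile hr).differentiableAt.differentiableWithinAt,
      by simp, ContinuousOn.congr ?_ fun r hr => (h.hasDerivAt_deriv_profile hr).deriv⟩
    have hr0 (r) (hr : r ∈ Ioo 0 T) : r ≠ 0 := hr.1.ne'
    have hpos (r) (hr : r ∈ Ioo 0 T) : profile u r ≠ 0 := (h.pos r (Ioo_subset_Ico_self hr)).ne'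
    fun_prop (disch := simp +contextual [hr0, hpos])
  rw [← one_add_one_eq_two, contDiffOn_succ_iff_deriv_of_isOpen isOpen_Ioo]
  exact ⟨fun r hr => (h.hasDerivAt_profile hr).differentiableAt.differentiableWithinAt, by simp,
    hp1.congr fun r hr => (h.hasDerivAt_profile hr).deriv⟩

lemma contDiffOn_one_profile (h : IsProfileSolOn m lam μ T u p) :
    ContDiffOn ℝ 1 (profile u) (Ico 0 T) := by
  have hderiv (r) (hr : r ∈ Ico 0 T) : HasDerivWithinAt (profile u) (p r) (Ico 0 T) r := by
    obtain rfl | hr0 := hr.1.eq_or_lt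
    · exact (h.hasDerivWithinAt_profile hr).mono Ico_subset_Ici_self
    · exact (h.hasDerivAt_profile ⟨hr0, hr.2⟩).hasDerivWithinAt
  rw [contDiffOn_one_iff_derivWithin (uniqueDiffOn_Ico 0 T)]
  exact ⟨fun r hr => (hderiv r hr).differentiableWithinAt,
    h.continuousOn_snd.congr fun r hr => (hderiv r hr).derivWithin (uniqueDiffOn_Ico 0 T r hr)⟩

lemma deriv_deriv_profile (h : IsProfileSolOn m lam μ T u p) {r : ℝ} (hr : r ∈ Ioo 0 T) :
    2 * r ^ 2 * profile u r * deriv (deriv (profile u)) r =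
      m * profile u r * (profile u r - 1) +
        r * deriv (profile u) r * (r * deriv (profile u) r - lam * r - m) := by
  have hderiv : deriv (profile u) =ᶠ[𝓝 r] p :=
    eventuallyEq_of_mem (isOpen_Ioo.mem_nhds hr) fun s hs => (h.hasDerivAt_profile hs).deriv
  rw [hderiv.deriv_eq, (h.hasDerivAt_deriv_profile hr).deriv, hderiv.self_of_nhds]
  have hr0 := hr.1.ne'
  have hpos := (h.pos r (Ioo_subset_Ico_self hr)).ne'
  field_simp
  ring

theorem isSolOn_profile {n : ℕ} (h : IsProfileSolOn ((n : ℝ) - 1) lam μ T u p) (hT : 0 < T) :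
    IsSolOn n lam μ T (profile u) := by
  refine ⟨h.contDiffOn_two_profile, h.contDiffOn_one_profile, fun r hr =>
    ⟨h.deriv_deriv_profile hr, h.pos r (Ioo_subset_Ico_self hr)⟩, profile_zero u, ?_⟩
  rw [(h.hasDerivWithinAt_profile (left_mem_Ico.2 hT)).derivWithin
    (uniqueDiffOn_Ici 0 0 self_mem_Ici), h.snd_zero]

end ToSecondOrder

end IsProfileSolOn

section OfSecondOrder

/-- The difference quotient `(g r - g 0) / r`, with the prescribed value `μ` at `r = 0`. It inverts
`profile` on functions with `g 0 = 1`. -/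
noncomputable def slopeAtZero (μ : ℝ) (g : ℝ → ℝ) : ℝ → ℝ :=
  Function.update (slope g 0) 0 μ

variable {g : ℝ → ℝ} {μ r : ℝ}

lemma slopeAtZero_of_ne (hr : r ≠ 0) : slopeAtZero μ g r = (g r - g 0) / r := by
  rw [slopeAtZero, Function.update_of_ne hr, slope_def_field, sub_zero]

lemma profile_slopeAtZero (hg : g 0 = 1) (μ : ℝ) : profile (slopeAtZero μ g) = g := by
  funext r
  obtain rfl | hr := eq_or_ne r 0
  · rw [profile_zero, hg]
  · rw [profile, slopeAtZero_of_ne hr, mul_div_cancel₀ _ hr, hg, add_sub_cancel]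

lemma hasDerivAt_slopeAtZero {g' : ℝ} (hr : r ≠ 0) (hg : HasDerivAt g g' r) :
    HasDerivAt (slopeAtZero μ g) (r⁻¹ • (g' - slopeAtZero μ g r)) r := by
  have heq : slopeAtZero μ g =ᶠ[𝓝 r] fun s => (g s - g 0) / s := by
    filter_upwards [isOpen_ne.mem_nhds hr] with s hs using slopeAtZero_of_ne hs
  refine (((hg.sub_const (g 0)).div (hasDerivAt_id r) hr).congr_of_eventuallyEq heq).congr_deriv ?_
  rw [slopeAtZero_of_ne hr, smul_eq_mul, id]
  field_simp

lemma continuousWithinAt_slopeAtZero {s : Set ℝ} (hg : HasDerivWithinAt g μ s 0) :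
    ContinuousWithinAt (slopeAtZero μ g) s 0 :=
  continuousWithinAt_update_same.2 (hasDerivWithinAt_iff_tendsto_slope.1 hg)

lemma hasDerivWithinAt_Ici_of_contDiffOn_Ico {a b : ℝ} (hg : ContDiffOn ℝ 1 g (Ico a b))
    (hr : r ∈ Ico a b) : HasDerivWithinAt g (derivWithin g (Ici a) r) (Ici a) r := by
  have := hg.differentiableOn one_ne_zero r hr
  rw [← Ici_inter_Iio, differentiableWithinAt_inter (Iio_mem_nhds hr.2)] at this
  exact this.hasDerivWithinAt

lemma continuousOn_derivWithin_Ici_of_contDiffOn_Ico {a b : ℝ} (hg : ContDiffOn ℝ 1 g (Ico a b)) :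
    ContinuousOn (derivWithin g (Ici a)) (Ico a b) := by
  refine ((contDiffOn_one_iff_derivWithin (uniqueDiffOn_Ico a b)).1 hg).2.congr fun r hr => ?_
  rw [← Ici_inter_Iio, derivWithin_inter (Iio_mem_nhds hr.2)]

lemma hasDerivAt_derivWithin_Ici_of_contDiffOn_Ioo {a b : ℝ} (hg : ContDiffOn ℝ 2 g (Ioo a b))
    (hr : r ∈ Ioo a b) : HasDerivAt (derivWithin g (Ici a)) (deriv (deriv g) r) r := by
  have hderiv : ContDiffOn ℝ 1 (deriv g) (Ioo a b) :=
    hg.deriv_of_isOpen isOpen_Ioo one_add_one_eq_two.le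
  have heq : derivWithin g (Ici a) =ᶠ[𝓝 r] deriv g := by
    filter_upwards [lt_mem_nhds hr.1] with s hs using derivWithin_of_mem_nhds (Ici_mem_nhds hs)
  exact ((hderiv.differentiableOn one_ne_zero).differentiableAt
    (isOpen_Ioo.mem_nhds hr)).hasDerivAt.congr_of_eventuallyEq heq

theorem IsSolOn.isProfileSolOn {n : ℕ} {lam L : ℝ} (h : IsSolOn n lam μ L g) :
    IsProfileSolOn ((n : ℝ) - 1) lam μ L (slopeAtZero μ g) (derivWithin g (Ici 0)) := by
  obtain ⟨hg2, hg1, hode, hg0, hgμ⟩ := h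
  have hderivWithin {r} (hr : r ∈ Ico 0 L) := hasDerivWithinAt_Ici_of_contDiffOn_Ico hg1 hr
  have hderiv {r} (hr : r ∈ Ioo 0 L) : HasDerivAt g (derivWithin g (Ici 0) r) r :=
    (hderivWithin (Ioo_subset_Ico_self hr)).hasDerivAt (Ici_mem_nhds hr.1)
  have hslope {r} (hr : r ∈ Ioo 0 L) := hasDerivAt_slopeAtZero (μ := μ) hr.1.ne' (hderiv hr)
  refine ⟨⟨fun r hr => ?_, continuousOn_derivWithin_Ici_of_contDiffOn_Ico hg1,
    Function.update_self _ _ _, hgμ, fun r hr => hslope hr, fun r hr => ?_⟩, fun r hr => ?_⟩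
  · obtain rfl | hr0 := hr.1.eq_or_lt
    · exact (continuousWithinAt_slopeAtZero (hgμ ▸ hderivWithin hr)).mono Ico_subset_Ici_self
    · exact (hslope ⟨hr0, hr.2⟩).continuousAt.continuousWithinAt
  · refine (hasDerivAt_derivWithin_Ici_of_contDiffOn_Ioo hg2 hr).congr_deriv ?_
    obtain ⟨heq, hpos⟩ := hode r hr
    have hr0 := hr.1.ne'
    rw [← (hderiv hr).deriv, forcing, ← profile, profile_slopeAtZero hg0, slopeAtZero_of_ne hr0,
      hg0, smul_eq_mul]
    field_simp
    linear_combination heq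
  · rw [profile_slopeAtZero hg0]
    obtain rfl | hr0 := hr.1.eq_or_lt
    · exact hg0 ▸ one_pos
    · exact (hode r ⟨hr0, hr.2⟩).2

end OfSecondOrder

end Profile

theorem existence_uniqueness_neg_lambda_general (lam μ₁ : ℝ) {n : ℕ} (hn : 2 ≤ n) {L : ℝ}
    (hL : 0 < L) (hq : 0 ≤ (n : ℝ) - 1 + lam * L) :
    ∃ h : ℝ → ℝ, IsSolOn n lam μ₁ L h ∧
      ∀ g : ℝ → ℝ, IsSolOn n lam μ₁ L g → EqOn g h (Ico 0 L) := by
  have hm : 0 < (n : ℝ) - 1 := sub_pos.2 (Nat.one_lt_cast.2 hn)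
  obtain ⟨u, p, h⟩ := IsProfileSolOn.exists_of_add_mul_nonneg hm μ₁ hL hq
  refine ⟨profile u, h.isSolOn_profile hL, fun g hg r hr => ?_⟩
  have hu : slopeAtZero μ₁ g r = u r := (hg.isProfileSolOn.eq_of_mem hm h hr hr.2).1
  rw [← profile_slopeAtZero hg.2.2.2.1 μ₁, profile, profile, hu]

theorem existence_uniqueness_neg_lambda (lam μ₁ : ℝ) (n : ℕ) (hlam : lam < 0)
    (hn2 : 2 ≤ n) (hn4 : n ≤ 4) :
    ∃ L : ℝ, -((n : ℝ) - 1) / lam ≤ L ∧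
      ∃ h : ℝ → ℝ, IsSolOn n lam μ₁ L h ∧
        ∀ g : ℝ → ℝ, IsSolOn n lam μ₁ L g → Set.EqOn g h (Set.Ico 0 L) := by
  have hm : 0 < (n : ℝ) - 1 := sub_pos.2 (Nat.one_lt_cast.2 hn2)
  exact ⟨_, le_rfl, existence_uniqueness_neg_lambda_general lam μ₁ hn2
    (div_pos_of_neg_of_neg (neg_lt_zero.2 hm) hlam)
    (by rw [mul_div_cancel₀ _ hlam.ne, add_neg_cancel])⟩
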